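/- Let k and n be positive integers with k > 2n, and let Ã : ℝ² → ℂ be a smooth compactly supported function. Set a(s,r) = r^{2n−1} Ã(s,r). Then, as λ → +∞, ∫₀^∞ ∫_ℝ e^{iλ s rᵏ} a(s,r) ds dr = λ^{−2n/k} (Γ(2n/k)/k) ∫_ℝ |s|^{−2n/k} exp(i π (n/k) sign(s)) Ã(s,0) ds + O(λ^{−(2n+1)/k}). -/

import Mathlib

open MeasureTheory

lemma aux_gam_int (α ε : ℝ) (hα : 0 < α) (hε : 0 < ε) :
    IntegrableOn (fun u : ℝ => u ^ (α - 1) * Real.exp (-(ε * u))) (Set.Ioi 0) := by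
  have := integrableOn_rpow_mul_exp_neg_mul_rpow (p := 1) (s := α - 1) (b := ε) (by linarith) one_pos hε
  simpa using this

lemma aux_gam (α : ℝ) (hα : 0 < α) (z : ℂ) (hz : 0 < z.re) :
    ∫ u in Set.Ioi (0:ℝ), ((u ^ (α - 1) : ℝ) : ℂ) * Complex.exp (-(z * u)) =
      (1 / z) ^ (α : ℂ) * (Real.Gamma α : ℂ) := by
  set U : Set ℂ := {z | 0 < z.re} with hU
  have hUo : IsOpen U := isOpen_lt continuous_const Complex.continuous_re
  have hUc : IsPreconnected U := (convex_halfSpace_re_gt 0).isPreconnected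
  have hnorm : ∀ (u : ℝ) (w : ℂ), ‖Complex.exp (-(w * u))‖ = Real.exp (-(w.re * u)) := by
    intro u w; rw [Complex.norm_exp]; simp
  have hmeas : ∀ (β : ℝ) (w : ℂ), Measurable
      (fun u : ℝ => ((u ^ β : ℝ) : ℂ) * Complex.exp (-(w * u))) := by
    intro β w; fun_prop
  have h1 : AnalyticOnNhd ℂ (fun w : ℂ => ∫ u in Set.Ioi (0:ℝ), ((u ^ (α - 1) : ℝ) : ℂ) * Complex.exp (-(w * u))) U := by
    apply DifferentiableOn.analyticOnNhd _ hUo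
    intro w hw
    have hw' : 0 < w.re := hw
    refine DifferentiableAt.differentiableWithinAt ?_
    have := (hasDerivAt_integral_of_dominated_loc_of_deriv_le (μ := volume.restrict (Set.Ioi (0:ℝ)))
      (F := fun (w : ℂ) (u : ℝ) => ((u ^ (α - 1) : ℝ) : ℂ) * Complex.exp (-(w * u)))
      (F' := fun (w : ℂ) (u : ℝ) => ((u ^ (α - 1) : ℝ) : ℂ) * (Complex.exp (-(w * u)) * (-(1 * u))))
      (bound := fun u => u ^ ((α + 1) - 1) * Real.exp (-((w.re / 2) * u)))
      (s := {v : ℂ | w.re / 2 < v.re}) (x₀ := w)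
      ((isOpen_lt continuous_const Complex.continuous_re).mem_nhds (by simp; linarith))
      (Filter.Eventually.of_forall fun v => (hmeas _ v).aestronglyMeasurable)
      ?_ ?_ ?_ ?_ ?_).2
    · exact this.differentiableAt
    · refine (aux_gam_int α w.re hα hw').mono' (hmeas _ _).aestronglyMeasurable ?_
      refine (ae_restrict_iff' measurableSet_Ioi).2 (Filter.Eventually.of_forall fun u hu => ?_)
      rw [norm_mul, hnorm, Complex.norm_real, Real.norm_of_nonneg (Real.rpow_nonneg (le_of_lt hu) _)]
    · apply Measurable.aestronglyMeasurable; fun_prop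
    · refine (ae_restrict_iff' measurableSet_Ioi).2 (Filter.Eventually.of_forall fun u hu v hv => ?_)
      have hu' : 0 < u := hu
      rw [norm_mul, norm_mul, hnorm, Complex.norm_real, Real.norm_of_nonneg (Real.rpow_nonneg (le_of_lt hu) _)]
      have e : u ^ (α + 1 - 1) = u ^ (α - 1) * u := by
        rw [← Real.rpow_add_one hu'.ne']; ring_nf
      rw [e]
      have e2 : ‖(-(1 * (u:ℂ)))‖ = u := by simp [abs_of_pos hu']
      rw [e2]
      have e3 : Real.exp (-(v.re * u)) ≤ Real.exp (-(w.re / 2 * u)) := by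
        apply Real.exp_le_exp.2
        have : w.re / 2 < v.re := hv
        nlinarith
      have := Real.rpow_nonneg hu'.le (α - 1)
      calc _ = u ^ (α - 1) * u * Real.exp (-(v.re * u)) := by ring
        _ ≤ _ := by gcongr
    · exact aux_gam_int (α + 1) _ (by linarith) (by linarith)
    · refine Filter.Eventually.of_forall fun u v _ => ?_
      apply HasDerivAt.const_mul
      apply HasDerivAt.cexp
      exact ((hasDerivAt_id v).mul_const _).neg
  have h2 : AnalyticOnNhd ℂ (fun w : ℂ => (1 / w) ^ (α : ℂ) * (Real.Gamma α : ℂ)) U := by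
    apply DifferentiableOn.analyticOnNhd _ hUo
    intro w hw
    have hw' : 0 < w.re := hw
    have hw0 : w ≠ 0 := by rintro rfl; simp at hw'
    refine DifferentiableAt.differentiableWithinAt ?_
    apply DifferentiableAt.mul_const
    apply DifferentiableAt.cpow_const
    · exact (differentiableAt_const _).div differentiableAt_id hw0
    · left
      simp only [one_div, Complex.inv_re]
      exact div_pos hw' (Complex.normSq_pos.2 hw0)
  have hone : (1:ℂ) ∈ U := by simp [hU]
  refine h1.eqOn_of_preconnected_of_frequently_eq h2 hUc hone ?_ hz
  have key : ∀ x : ℝ, 0 < x → (∫ u in Set.Ioi (0:ℝ), ((u ^ (α - 1) : ℝ) : ℂ) * Complex.exp (-((x:ℂ) * u)))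
      = (1 / (x:ℂ)) ^ (α : ℂ) * (Real.Gamma α : ℂ) := by
    intro x hx
    rw [← Complex.Gamma_ofReal, ← Complex.integral_cpow_mul_exp_neg_mul_Ioi (by simpa using hα) hx]
    refine setIntegral_congr_fun measurableSet_Ioi fun u hu => ?_
    rw [Complex.ofReal_cpow (le_of_lt hu)]; simp
  have ht : Filter.Tendsto (fun x : ℝ => (x : ℂ)) (nhdsWithin 1 (Set.Ioi 1)) (nhdsWithin (1:ℂ) {1}ᶜ) := by
    apply tendsto_nhdsWithin_of_tendsto_nhds_of_eventually_within
    · exact ((Complex.continuous_ofReal.tendsto 1)).mono_left nhdsWithin_le_nhds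
    · filter_upwards [self_mem_nhdsWithin] with x hx
      have : x ≠ 1 := ne_of_gt hx
      simpa using this
  refine ht.frequently (Filter.Eventually.frequently ?_)
  filter_upwards [self_mem_nhdsWithin] with x hx
  exact key x (lt_trans one_pos hx)

lemma aux_lim (α : ℝ) (s : ℝ) (hs : s ≠ 0) :
    (1 / (-(Complex.I * s))) ^ (α : ℂ) =
      ((|s| ^ (-α) : ℝ) : ℂ) * Complex.exp (Complex.I * ((Real.pi * (α / 2) * Real.sign s : ℝ) : ℂ)) := by
  have hs' : (s:ℂ) ≠ 0 := by exact_mod_cast hs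
  rcases lt_or_gt_of_ne hs with h | h
  · have e : 1 / (-(Complex.I * s)) = ((-s)⁻¹ : ℝ) * (-Complex.I) := by
      push_cast; field_simp; simp
    have hp : 0 < (-s)⁻¹ := inv_pos.2 (by linarith)
    rw [e, Complex.cpow_def_of_ne_zero (mul_ne_zero (by exact_mod_cast hp.ne') (by simp)),
      Complex.log_ofReal_mul hp (by simp), Complex.log_neg_I, Real.sign_of_neg h, abs_of_neg h,
      Real.rpow_def_of_pos (by linarith), Complex.ofReal_exp, ← Complex.exp_add, Real.log_inv]
    congr 1
    push_cast; ring
  · have e : 1 / (-(Complex.I * s)) = ((s)⁻¹ : ℝ) * (Complex.I) := by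
      push_cast; field_simp; simp
    have hp : 0 < (s)⁻¹ := inv_pos.2 (by linarith)
    rw [e, Complex.cpow_def_of_ne_zero (mul_ne_zero (by exact_mod_cast hp.ne') (by simp)),
      Complex.log_ofReal_mul hp (by simp), Complex.log_I, Real.sign_of_pos h, abs_of_pos h,
      Real.rpow_def_of_pos (by linarith), Complex.ofReal_exp, ← Complex.exp_add, Real.log_inv]
    congr 1
    push_cast; ring

lemma aux_abs_int (α : ℝ) (h1 : α < 1) (g : ℝ → ℂ) (hg : Continuous g)
    (hc : HasCompactSupport g) : Integrable (fun s : ℝ => |s| ^ (-α) * ‖g s‖) := by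
  have h0 : LocallyIntegrable (fun s : ℝ => |s| ^ (-α)) := by
    have key : ∀ R : ℝ, 0 ≤ R → IntegrableOn (fun s : ℝ => |s| ^ (-α)) (Set.Ioc (-R) R) := by
      intro R hR
      have a1 : IntervalIntegrable (fun s : ℝ => |s| ^ (-α)) volume 0 R := by
        have := intervalIntegral.intervalIntegrable_rpow' (a := 0) (b := R) (r := -α) (by linarith)
        refine this.congr ?_
        intro x hx
        rw [Set.uIoc_of_le hR] at hx
        simp only
        rw [abs_of_pos hx.1]
      have a2 : IntervalIntegrable (fun s : ℝ => |s| ^ (-α)) volume (-R) 0 := by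
        rw [IntervalIntegrable.iff_comp_neg]
        simpa using a1.symm
      have := a2.trans a1
      rwa [intervalIntegrable_iff_integrableOn_Ioc_of_le (by linarith)] at this
    rw [locallyIntegrable_iff]
    intro K hK
    obtain ⟨R, hR⟩ := hK.isBounded.subset_ball (0:ℝ)
    refine (key (max R 0) (le_max_right _ _)).mono_set ?_
    intro x hx
    have := hR hx
    simp only [Metric.mem_ball, dist_zero_right, Real.norm_eq_abs] at this
    have h3 := abs_lt.1 this
    constructor
    · have := le_max_left R 0; linarith
    · exact le_trans h3.2.le (le_max_left _ _)
  have := h0.integrable_smul_left_of_hasCompactSupport (g := fun s => ‖g s‖) hg.norm hc.norm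
  refine this.congr (Filter.Eventually.of_forall fun s => ?_)
  simp [mul_comm]

lemma aux_main (α : ℝ) (h0 : 0 < α) (h1 : α < 1) (g : ℝ → ℂ) (hg : Continuous g)
    (hc : HasCompactSupport g)
    (hG : IntegrableOn (fun u : ℝ => ((u ^ (α - 1) : ℝ) : ℂ) *
      ∫ s : ℝ, Complex.exp (Complex.I * ((u * s : ℝ) : ℂ)) * g s) (Set.Ioi 0)) :
    ∫ u in Set.Ioi (0:ℝ), ((u ^ (α - 1) : ℝ) : ℂ) *
      ∫ s : ℝ, Complex.exp (Complex.I * ((u * s : ℝ) : ℂ)) * g s =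
    (Real.Gamma α : ℂ) * ∫ s : ℝ, ((|s| ^ (-α) : ℝ) : ℂ) *
      Complex.exp (Complex.I * ((Real.pi * (α / 2) * Real.sign s : ℝ) : ℂ)) * g s := by
  set G : ℝ → ℂ := fun u => ∫ s : ℝ, Complex.exp (Complex.I * ((u * s : ℝ) : ℂ)) * g s with hGdef
  have gint : Integrable g := hg.integrable_of_hasCompactSupport hc
  have reg : ∀ ε : ℝ, 0 < ε → ∫ u in Set.Ioi (0:ℝ), (Real.exp (-(ε * u)) : ℂ) * (((u ^ (α - 1) : ℝ) : ℂ) * G u) =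
      ∫ s : ℝ, ((1 / (ε - Complex.I * s)) ^ (α : ℂ) * (Real.Gamma α : ℂ)) * g s := by
    intro ε hε
    have sw := integral_integral_swap (μ := volume.restrict (Set.Ioi (0:ℝ))) (ν := (volume : Measure ℝ))
      (f := fun u s => (((u ^ (α - 1) : ℝ) : ℂ) * Complex.exp (-((ε - Complex.I * s) * u))) * g s) ?_
    · calc _ = ∫ u in Set.Ioi (0:ℝ), ∫ s : ℝ, (((u ^ (α - 1) : ℝ) : ℂ) * Complex.exp (-((ε - Complex.I * s) * u))) * g s := by
            congr 1; ext u
            rw [hGdef]; simp only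
            rw [← mul_assoc, ← integral_const_mul]
            congr 1; ext s
            have : Complex.exp (-((ε - Complex.I * s) * u)) =
                (Real.exp (-(ε * u)) : ℂ) * Complex.exp (Complex.I * ((u * s : ℝ) : ℂ)) := by
              rw [Complex.ofReal_exp, ← Complex.exp_add]; congr 1; push_cast; ring
            rw [this]; ring
        _ = _ := by
            rw [sw]
            congr 1; ext s
            rw [integral_mul_const, aux_gam α h0 _ (by simpa using hε)]
    · have p := ((aux_gam_int α ε h0 hε).integrable).mul_prod (gint.norm)
      refine p.mono' ?_ ?_
      · apply AEStronglyMeasurable.mul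
        · apply Measurable.aestronglyMeasurable; fun_prop
        · exact (hg.comp continuous_snd).aestronglyMeasurable
      · have : ∀ᵐ z : ℝ × ℝ ∂((volume.restrict (Set.Ioi (0:ℝ))).prod volume), 0 < z.1 := by
          have := Measure.quasiMeasurePreserving_fst (μ := volume.restrict (Set.Ioi (0:ℝ))) (ν := (volume : Measure ℝ))
          exact this.ae (ae_restrict_mem measurableSet_Ioi)
        filter_upwards [this] with z hz
        simp only [Function.uncurry]
        rw [norm_mul, norm_mul, Complex.norm_real, Real.norm_of_nonneg (Real.rpow_nonneg hz.le _), Complex.norm_exp]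
        simp
  have L1 : Filter.Tendsto (fun ε : ℝ => ∫ u in Set.Ioi (0:ℝ), (Real.exp (-(ε * u)) : ℂ) * (((u ^ (α - 1) : ℝ) : ℂ) * G u))
      (nhdsWithin 0 (Set.Ioi 0)) (nhds (∫ u in Set.Ioi (0:ℝ), (((u ^ (α - 1) : ℝ) : ℂ) * G u))) := by
    apply tendsto_integral_filter_of_dominated_convergence (fun u => ‖((u ^ (α - 1) : ℝ) : ℂ) * G u‖)
    · refine Filter.Eventually.of_forall fun ε => ?_
      refine AEStronglyMeasurable.mul ?_ hG.aestronglyMeasurable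
      apply Measurable.aestronglyMeasurable; fun_prop
    · filter_upwards [self_mem_nhdsWithin] with ε hε
      refine (ae_restrict_iff' measurableSet_Ioi).2 (Filter.Eventually.of_forall fun u hu => ?_)
      rw [norm_mul]
      have : ‖(Real.exp (-(ε * u)) : ℂ)‖ ≤ 1 := by
        rw [Complex.norm_real, Real.norm_of_nonneg (Real.exp_pos _).le]
        apply Real.exp_le_one_iff.2
        have := mul_pos (show 0 < ε from hε) (show 0 < u from hu)
        linarith
      exact mul_le_of_le_one_left (norm_nonneg _) this
    · exact hG.norm
    · refine Filter.Eventually.of_forall fun u => ?_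
      have c : Continuous (fun ε : ℝ => (Real.exp (-(ε * u)) : ℂ) * (((u ^ (α - 1) : ℝ) : ℂ) * G u)) := by fun_prop
      have := (c.tendsto 0).mono_left (nhdsWithin_le_nhds (s := Set.Ioi 0))
      simpa using this
  have L2 : Filter.Tendsto (fun ε : ℝ => ∫ s : ℝ, ((1 / (ε - Complex.I * s)) ^ (α : ℂ) * (Real.Gamma α : ℂ)) * g s)
      (nhdsWithin 0 (Set.Ioi 0)) (nhds (∫ s : ℝ, (((|s| ^ (-α) : ℝ) : ℂ) *
      Complex.exp (Complex.I * ((Real.pi * (α / 2) * Real.sign s : ℝ) : ℂ)) * (Real.Gamma α : ℂ)) * g s)) := by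
    apply tendsto_integral_filter_of_dominated_convergence (fun s => |Real.Gamma α| * (|s| ^ (-α) * ‖g s‖))
    · refine Filter.Eventually.of_forall fun ε => ?_
      refine AEStronglyMeasurable.mul ?_ hg.aestronglyMeasurable
      apply Measurable.aestronglyMeasurable; fun_prop
    · filter_upwards [self_mem_nhdsWithin] with ε hε
      have h : ∀ᵐ s : ℝ, s ≠ 0 := by simp [ae_iff]
      filter_upwards [h] with s hs
      rw [norm_mul, norm_mul, Complex.norm_real, Complex.norm_cpow_real, Real.norm_eq_abs]
      have hs' : 0 < |s| := abs_pos.2 hs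
      have e : |s| ≤ ‖(ε - Complex.I * s : ℂ)‖ := by
        have := Complex.abs_im_le_norm (ε - Complex.I * s : ℂ)
        simpa using this
      have : ‖(1 / (ε - Complex.I * s) : ℂ)‖ ^ α ≤ |s| ^ (-α) := by
        rw [norm_div, norm_one, Real.rpow_neg hs'.le, ← Real.inv_rpow hs'.le, ← one_div]
        apply Real.rpow_le_rpow (by positivity) _ h0.le
        exact one_div_le_one_div_of_le hs' e
      calc _ = |Real.Gamma α| * (‖(1 / (ε - Complex.I * s) : ℂ)‖ ^ α * ‖g s‖) := by ring
        _ ≤ _ := by gcongr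
    · exact (aux_abs_int α h1 g hg hc).const_mul _
    · have h : ∀ᵐ s : ℝ, s ≠ 0 := by simp [ae_iff]
      filter_upwards [h] with s hs
      rw [← aux_lim α s hs]
      apply Filter.Tendsto.mul_const
      apply Filter.Tendsto.mul_const
      have hs' : (s:ℂ) ≠ 0 := by exact_mod_cast hs
      have c : ContinuousAt (fun ε : ℝ => (1 / ((ε:ℂ) - Complex.I * s)) ^ (α : ℂ)) 0 := by
        apply ContinuousAt.cpow _ continuousAt_const
        · right
          have : 1 / (((0:ℝ):ℂ) - Complex.I * s) = ((s⁻¹ : ℝ) : ℂ) * Complex.I := by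
            push_cast; field_simp
            linear_combination (s:ℂ) * Complex.I_mul_I
          rw [this]; simpa using hs
        · apply ContinuousAt.div continuousAt_const (by fun_prop)
          simpa using hs
      have := c.tendsto.mono_left (nhdsWithin_le_nhds (s := Set.Ioi 0))
      simpa using this
  have L1' := L1.congr' (f₂ := fun ε : ℝ => ∫ s : ℝ, ((1 / (ε - Complex.I * s)) ^ (α : ℂ) * (Real.Gamma α : ℂ)) * g s) (by
    filter_upwards [self_mem_nhdsWithin] with ε hε
    exact reg ε hε)
  rw [tendsto_nhds_unique L1' L2, ← integral_const_mul]
  congr 1; ext s; ring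


noncomputable def auxD (f : ℝ × ℝ → ℂ) : ℝ × ℝ → ℂ := fun p => fderiv ℝ f p (1, 0)

noncomputable def auxF (f : ℝ × ℝ → ℂ) (t r : ℝ) : ℂ :=
  ∫ s : ℝ, Complex.exp (Complex.I * ((t * s : ℝ) : ℂ)) * f (s, r)

lemma auxD_smooth (f : ℝ × ℝ → ℂ) (hf : ContDiff ℝ (⊤ : ℕ∞) f) : ContDiff ℝ (⊤ : ℕ∞) (auxD f) :=
  (hf.fderiv_right (m := (⊤ : ℕ∞)) (by simp)).clm_apply contDiff_const

lemma auxD_supp (f : ℝ × ℝ → ℂ) (hf : HasCompactSupport f) : HasCompactSupport (auxD f) :=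
  hf.fderiv_apply ℝ (1, 0)

lemma auxD_deriv (f : ℝ × ℝ → ℂ) (hf : ContDiff ℝ (⊤ : ℕ∞) f) (s r : ℝ) :
    HasDerivAt (fun s => f (s, r)) (auxD f (s, r)) s := by
  have h1 : HasFDerivAt f (fderiv ℝ f (s, r)) (s, r) :=
    (hf.differentiable (by simp) (s, r)).hasFDerivAt
  exact h1.comp_hasDerivAt s ((hasDerivAt_id s).prodMk (hasDerivAt_const s r))

lemma aux_slice (f : ℝ × ℝ → ℂ) (hf : HasCompactSupport f) (r : ℝ) :
    HasCompactSupport (fun s => f (s, r)) :=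
  HasCompactSupport.intro (hf.isCompact.image continuous_fst) fun s hs => by
    by_contra h
    exact hs ⟨(s, r), subset_tsupport f h, rfl⟩

lemma aux_int (f : ℝ × ℝ → ℂ) (hf : Continuous f) (hc : HasCompactSupport f) (t r : ℝ) :
    Integrable (fun s : ℝ => Complex.exp (Complex.I * ((t * s : ℝ) : ℂ)) * f (s, r)) := by
  apply Continuous.integrable_of_hasCompactSupport
  · fun_prop
  · exact (aux_slice f hc r).mul_left

lemma auxF_D (f : ℝ × ℝ → ℂ) (hf : ContDiff ℝ (⊤ : ℕ∞) f) (hc : HasCompactSupport f) (t r : ℝ) :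
    auxF (auxD f) t r = -(Complex.I * t) * auxF f t r := by
  unfold auxF
  have hd : ∀ s : ℝ, HasDerivAt (fun s : ℝ => Complex.exp (Complex.I * ((t * s : ℝ) : ℂ)))
      (Complex.exp (Complex.I * ((t * s : ℝ) : ℂ)) * (Complex.I * t)) s := by
    intro s
    apply HasDerivAt.cexp
    apply HasDerivAt.const_mul
    have := ((hasDerivAt_id s).const_mul t).ofReal_comp
    simpa using this
  have i0 := aux_int f hf.continuous hc t r
  rw [integral_mul_deriv_eq_deriv_mul_of_integrable (fun x _ => hd x)
    (fun x _ => auxD_deriv f hf x r)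
    (aux_int _ (auxD_smooth f hf).continuous (auxD_supp f hc) t r) ?_ i0, ← integral_const_mul,
    ← integral_neg]
  · congr 1; ext s; ring
  · refine (i0.const_mul (Complex.I * t)).congr (Filter.Eventually.of_forall fun s => ?_)
    simp only [Pi.mul_apply]; ring

lemma auxF_DD (f : ℝ × ℝ → ℂ) (hf : ContDiff ℝ (⊤ : ℕ∞) f) (hc : HasCompactSupport f) (t r : ℝ) :
    auxF (auxD (auxD f)) t r = -(t : ℂ) ^ 2 * auxF f t r := by
  rw [auxF_D _ (auxD_smooth f hf) (auxD_supp f hc), auxF_D _ hf hc]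
  linear_combination (t:ℂ)^2 * auxF f t r * Complex.I_mul_I

lemma aux_expnorm (x : ℝ) : ‖Complex.exp (Complex.I * (x : ℂ))‖ = 1 := by
  rw [mul_comm]; exact Complex.norm_exp_ofReal_mul_I x

lemma aux_b0 (f : ℝ × ℝ → ℂ) (hf : ContDiff ℝ (⊤ : ℕ∞) f) (hc : HasCompactSupport f) :
    ∃ C : ℝ, 0 ≤ C ∧ (∀ t, ‖auxF f t 0‖ ≤ C) ∧ ∀ t r, ‖auxF f t r - auxF f t 0‖ ≤ C * |r| := by
  obtain ⟨L, hL⟩ := hf.lipschitzWith_of_hasCompactSupport hc (by simp)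
  obtain ⟨R, hR⟩ := hc.isCompact.isBounded.subset_closedBall (0 : ℝ × ℝ)
  have hz : ∀ s r, s ∉ Set.Icc (-R) R → f (s, r) = 0 := by
    intro s r hs
    by_contra h
    have := hR (subset_tsupport f h)
    simp only [Metric.mem_closedBall, dist_zero_right, Prod.norm_mk, sup_le_iff, Real.norm_eq_abs] at this
    exact hs (abs_le.1 this.1)
  refine ⟨(∫ s : ℝ, ‖f (s, 0)‖) + L * (volume.real (Set.Icc (-R) R)), by positivity, ?_, ?_⟩
  · intro t
    have : ‖auxF f t 0‖ ≤ ∫ s : ℝ, ‖f (s, 0)‖ := by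
      refine (norm_integral_le_integral_norm _).trans (le_of_eq ?_)
      congr 1; ext s; rw [norm_mul, aux_expnorm, one_mul]
    have h2 : 0 ≤ L * (volume.real (Set.Icc (-R) R)) := by positivity
    linarith
  · intro t r
    have h2 : 0 ≤ ∫ s : ℝ, ‖f (s, 0)‖ := by positivity
    unfold auxF
    rw [← integral_sub (aux_int f hf.continuous hc t r) (aux_int f hf.continuous hc t 0),
      ← setIntegral_eq_integral_of_forall_compl_eq_zero (s := Set.Icc (-R) R)]
    · have := norm_setIntegral_le_of_norm_le_const (μ := volume) (s := Set.Icc (-R) R)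
        (f := fun s : ℝ => Complex.exp (Complex.I * ((t * s : ℝ) : ℂ)) * f (s, r) -
          Complex.exp (Complex.I * ((t * s : ℝ) : ℂ)) * f (s, 0)) (C := L * |r|)
        (by simp) (by
          intro s _
          rw [← mul_sub, norm_mul, aux_expnorm, one_mul]
          have := hL.norm_sub_le (s, r) (s, 0)
          simpa using this)
      refine this.trans ?_
      nlinarith [abs_nonneg r]
    · intro s hs
      rw [hz s r hs, hz s 0 hs]; simp

lemma aux_b (f : ℝ × ℝ → ℂ) (hf : ContDiff ℝ (⊤ : ℕ∞) f) (hc : HasCompactSupport f) :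
    ∃ C : ℝ, 0 ≤ C ∧ (∀ t, ‖auxF f t 0‖ ≤ C / (1 + t ^ 2)) ∧
      ∀ t r, ‖auxF f t r - auxF f t 0‖ ≤ C * |r| / (1 + t ^ 2) := by
  obtain ⟨C1, h1, h2, h3⟩ := aux_b0 f hf hc
  obtain ⟨C2, g1, g2, g3⟩ := aux_b0 _ (auxD_smooth _ (auxD_smooth f hf)) (auxD_supp _ (auxD_supp f hc))
  have e : ∀ (t : ℝ), ‖-(t:ℂ)^2‖ = t ^ 2 := by intro t; simp
  refine ⟨C1 + C2, by positivity, fun t => ?_, fun t r => ?_⟩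
  · rw [le_div_iff₀ (by positivity)]
    have := g2 t
    rw [auxF_DD f hf hc, norm_mul, e] at this
    linarith [h2 t]
  · rw [le_div_iff₀ (by positivity)]
    have := g3 t r
    rw [auxF_DD f hf hc, auxF_DD f hf hc, ← mul_sub, norm_mul, e] at this
    linarith [h3 t r]

lemma aux_Fmeas (f : ℝ × ℝ → ℂ) (hf : Continuous f) :
    StronglyMeasurable (fun p : ℝ × ℝ => auxF f p.1 p.2) := by
  unfold auxF
  apply StronglyMeasurable.integral_prod_right
    (f := fun (p : ℝ × ℝ) (s : ℝ) => Complex.exp (Complex.I * ((p.1 * s : ℝ) : ℂ)) * f (s, p.2))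
  apply Continuous.stronglyMeasurable
  simp only [Function.uncurry_def]
  fun_prop

lemma aux_wint (m k : ℕ) (h : m + 1 < 2 * k) :
    IntegrableOn (fun x : ℝ => x ^ m / (1 + (x ^ k) ^ 2)) (Set.Ioi 0) := by
  have hcont : Continuous (fun x : ℝ => x ^ m / (1 + (x ^ k) ^ 2)) := by
    apply Continuous.div (by fun_prop) (by fun_prop)
    intro x; positivity
  rw [← Set.Ioc_union_Ioi_eq_Ioi (zero_le_one (α := ℝ)), integrableOn_union]
  constructor
  · exact (hcont.integrableOn_Icc).mono_set Set.Ioc_subset_Icc_self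
  · have := integrableOn_Ioi_rpow_of_lt (a := -2) (c := 1) (by norm_num) one_pos
    refine this.mono' hcont.aestronglyMeasurable ?_
    refine (ae_restrict_iff' measurableSet_Ioi).2 (Filter.Eventually.of_forall fun x hx => ?_)
    have hx' : 1 < x := hx
    have hx0 : 0 < x := by linarith
    rw [Real.norm_of_nonneg (by positivity), Real.rpow_neg hx0.le, div_le_iff₀ (by positivity)]
    have : x ^ (2:ℝ) = x ^ 2 := by norm_cast
    rw [this, inv_mul_eq_div, le_div_iff₀ (by positivity), ← pow_add, ← pow_mul]
    have : x ^ (m + 2) ≤ x ^ (k * 2) := pow_le_pow_right₀ hx'.le (by omega)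
    linarith

lemma aux_wscale (m k : ℕ) (μ : ℝ) (hμ : 0 < μ) :
    ∫ r in Set.Ioi (0:ℝ), r ^ m / (1 + ((μ * r) ^ k) ^ 2) =
      (μ ^ (m + 1))⁻¹ * ∫ x in Set.Ioi (0:ℝ), x ^ m / (1 + (x ^ k) ^ 2) := by
  have := integral_comp_mul_left_Ioi (fun x : ℝ => x ^ m / (1 + (x ^ k) ^ 2)) 0 hμ
  rw [mul_zero] at this
  rw [pow_succ, mul_inv, mul_assoc, ← smul_eq_mul (a := μ⁻¹), ← this, ← integral_const_mul]
  congr 1; ext r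
  rw [mul_pow μ r m]; field_simp

lemma aux_wint' (m k : ℕ) (h : m + 1 < 2 * k) (μ : ℝ) (hμ : 0 < μ) :
    IntegrableOn (fun x : ℝ => x ^ m / (1 + ((μ * x) ^ k) ^ 2)) (Set.Ioi 0) := by
  have := (integrableOn_Ioi_comp_mul_left_iff (fun x : ℝ => x ^ m / (1 + (x ^ k) ^ 2)) 0 hμ).2
    (by simpa using aux_wint m k h)
  refine (this.const_mul ((μ ^ m)⁻¹)).congr (Filter.Eventually.of_forall fun r => ?_)
  simp only
  rw [mul_pow μ r m]; field_simp

lemma aux_pw (k n : ℕ) (hk : 0 < k) (hn : 0 < n) (x : ℝ) (hx : 0 < x) :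
    x ^ ((k:ℝ) - 1) * ((x ^ (k:ℝ)) ^ ((2 * n : ℝ) / (k : ℝ) - 1)) = x ^ (2 * n - 1) := by
  rw [← Real.rpow_mul hx.le, ← Real.rpow_add hx, ← Real.rpow_natCast x (2 * n - 1)]
  congr 1
  have hk' : (k:ℝ) ≠ 0 := by positivity
  rw [Nat.cast_sub (by omega)]
  push_cast
  field_simp
  ring

lemma aux_J (k n : ℕ) (hk : 0 < k) (hn : 0 < n) (hkn : 2 * n < k)
    (A : ℝ × ℝ → ℂ) (hA : ContDiff ℝ (⊤ : ℕ∞) A) (hcA : HasCompactSupport A) :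
    ∫ x in Set.Ioi (0:ℝ), (x : ℂ) ^ (2 * n - 1) * auxF A (x ^ k) 0 =
      ((Real.Gamma ((2 * n : ℝ) / (k : ℝ)) / (k : ℝ) : ℝ) : ℂ) *
              ∫ s : ℝ,
                ((|s| ^ (-((2 * n : ℝ) / (k : ℝ))) : ℝ) : ℂ) *
                  Complex.exp (Complex.I *
                    ((Real.pi * ((n : ℝ) / (k : ℝ)) * Real.sign s : ℝ) : ℂ)) *
                  A (s, 0) := by
  obtain ⟨C, hC, hb, -⟩ := aux_b A hA hcA
  have hk' : (0:ℝ) < k := by exact_mod_cast hk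
  have hn' : (0:ℝ) < n := by exact_mod_cast hn
  have hkn' : (2 * n : ℝ) < k := by exact_mod_cast hkn
  set α : ℝ := (2 * n : ℝ) / (k : ℝ) with hα
  have h0 : 0 < α := by positivity
  have h1 : α < 1 := by rw [hα, div_lt_one hk']; exact hkn'
  have hm := aux_Fmeas A hA.continuous
  have hm' : Measurable (fun x : ℝ => auxF A (x ^ k) 0) :=
    hm.measurable.comp (by fun_prop : Measurable (fun x : ℝ => ((x ^ k, 0) : ℝ × ℝ)))
  have i1 : IntegrableOn (fun x : ℝ => (x : ℂ) ^ (2 * n - 1) * auxF A (x ^ k) 0) (Set.Ioi 0) := by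
    refine ((aux_wint (2 * n - 1) k (by omega)).const_mul C).mono' ?_ ?_
    · apply Measurable.aestronglyMeasurable
      exact Measurable.mul (by fun_prop) hm'
    · refine (ae_restrict_iff' measurableSet_Ioi).2 (Filter.Eventually.of_forall fun x hx => ?_)
      have hx' : 0 < x := hx
      rw [norm_mul, norm_pow, Complex.norm_real, Real.norm_of_nonneg hx'.le]
      calc _ ≤ x ^ (2 * n - 1) * (C / (1 + (x ^ k) ^ 2)) := by gcongr; exact hb _
        _ = _ := by ring
  have pw : ∀ x ∈ Set.Ioi (0:ℝ), x ^ ((k:ℝ) - 1) • (fun u : ℝ => ((u ^ (α - 1) : ℝ) : ℂ) * auxF A u 0) (x ^ (k:ℝ))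
      = (x : ℂ) ^ (2 * n - 1) * auxF A (x ^ k) 0 := by
    intro x hx
    have := aux_pw k n hk hn x hx
    simp only
    rw [Complex.real_smul, ← mul_assoc, ← Complex.ofReal_mul, this, Real.rpow_natCast]
    push_cast; rfl
  have i2 : IntegrableOn (fun u : ℝ => ((u ^ (α - 1) : ℝ) : ℂ) * auxF A u 0) (Set.Ioi 0) := by
    rw [← integrableOn_Ioi_comp_rpow_iff' _ hk'.ne']
    exact i1.congr_fun (fun x hx => (pw x hx).symm) measurableSet_Ioi
  have m := aux_main α h0 h1 (fun s => A (s, 0)) (by have := hA.continuous; fun_prop) (aux_slice A hcA 0) i2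
  have e : (n : ℝ) / k = α / 2 := by rw [hα]; ring
  rw [e]
  have sub := integral_comp_rpow_Ioi_of_pos (g := fun u : ℝ => ((u ^ (α - 1) : ℝ) : ℂ) * auxF A u 0) hk'
  have m' : ∫ u in Set.Ioi (0:ℝ), ((u ^ (α - 1) : ℝ) : ℂ) * auxF A u 0 = _ := m
  rw [m'] at sub
  have sub2 : ∫ x in Set.Ioi (0:ℝ), ((k:ℝ) * x ^ ((k:ℝ) - 1)) • (fun u : ℝ => ((u ^ (α - 1) : ℝ) : ℂ) * auxF A u 0) (x ^ (k:ℝ))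
     = (k : ℂ) * ∫ x in Set.Ioi (0:ℝ), (x : ℂ) ^ (2 * n - 1) * auxF A (x ^ k) 0 := by
    rw [← integral_const_mul]
    refine setIntegral_congr_fun measurableSet_Ioi fun x hx => ?_
    simp only [← pw x hx]
    rw [mul_smul, Complex.real_smul]
    simp
  rw [sub2] at sub
  have hkc : (k:ℂ) ≠ 0 := by exact_mod_cast hk.ne'
  push_cast at sub ⊢
  rw [div_mul_eq_mul_div, eq_div_iff hkc, mul_comm, sub]

/-- For `k > 2n` and `Ã` smooth compactly supported on `ℝ²`, with
`a(s,r) = r^{2n−1} Ã(s,r)`,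
`∫₀^∞ ∫_ℝ e^{iλ s rᵏ} a(s,r) ds dr
  = λ^{−2n/k} (Γ(2n/k)/k) ∫_ℝ |s|^{−2n/k} e^{iπ(n/k) sign s} Ã(s,0) ds
    + O(λ^{−(2n+1)/k})` as `λ → +∞`. -/
theorem stmt_2 (k n : ℕ) (hk : 0 < k) (hn : 0 < n) (hkn : 2 * n < k)
    (A : ℝ × ℝ → ℂ) (hA : ContDiff ℝ (⊤ : ℕ∞) A) (hcA : HasCompactSupport A)
    (a : ℝ → ℝ → ℂ) (hdef : ∀ s r : ℝ, a s r = (r : ℂ) ^ (2 * n - 1) * A (s, r)) :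
    ∃ C Λ : ℝ, ∀ lam : ℝ, Λ ≤ lam →
      ‖(∫ r in Set.Ioi (0:ℝ), ∫ s : ℝ,
            Complex.exp (Complex.I * ((lam * s * r ^ k : ℝ) : ℂ)) * a s r)
        - ((lam ^ (-((2 * n : ℝ) / (k : ℝ))) : ℝ) : ℂ) *
            (((Real.Gamma ((2 * n : ℝ) / (k : ℝ)) / (k : ℝ) : ℝ) : ℂ) *
              ∫ s : ℝ,
                ((|s| ^ (-((2 * n : ℝ) / (k : ℝ))) : ℝ) : ℂ) *
                  Complex.exp (Complex.I *
                    ((Real.pi * ((n : ℝ) / (k : ℝ)) * Real.sign s : ℝ) : ℂ)) *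
                  A (s, 0))‖
      ≤ C * lam ^ (-((2 * (n : ℝ) + 1) / (k : ℝ))) := by
  obtain ⟨C, hC, hb, hd⟩ := aux_b A hA hcA
  have hk' : (0:ℝ) < k := by exact_mod_cast hk
  have hm := aux_Fmeas A hA.continuous
  refine ⟨C * ∫ x in Set.Ioi (0:ℝ), x ^ (2 * n) / (1 + (x ^ k) ^ 2), 1, fun lam hlam => ?_⟩
  have hl : 0 < lam := by linarith
  set μ : ℝ := lam ^ ((1:ℝ) / k) with hμd
  have hμ : 0 < μ := by positivity
  have hμp : ∀ m : ℕ, (μ ^ m)⁻¹ = lam ^ (-((m:ℝ) / k)) := by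
    intro m
    rw [hμd, ← Real.rpow_natCast, ← Real.rpow_mul hl.le, Real.rpow_neg hl.le]
    congr 2; ring
  have hμk : μ ^ k = lam := by
    rw [hμd, ← Real.rpow_natCast, ← Real.rpow_mul hl.le]
    rw [one_div_mul_cancel hk'.ne', Real.rpow_one]
  have e1 : ∀ r : ℝ, (∫ s : ℝ, Complex.exp (Complex.I * ((lam * s * r ^ k : ℝ) : ℂ)) * a s r) =
      (r : ℂ) ^ (2 * n - 1) * auxF A ((μ * r) ^ k) r := by
    intro r
    unfold auxF
    rw [← integral_const_mul]
    congr 1; ext s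
    rw [hdef, mul_pow, hμk]
    have : lam * s * r ^ k = lam * r ^ k * s := by ring
    rw [this]; ring
  simp_rw [e1]
  have hmF : ∀ g : ℝ → ℝ, Measurable g → Measurable (fun x : ℝ => (x : ℂ) ^ (2 * n - 1) * auxF A ((μ * x) ^ k) (g x)) := by
    intro g hg
    refine Measurable.mul (by fun_prop) ?_
    exact hm.measurable.comp (by fun_prop : Measurable (fun x : ℝ => (((μ * x) ^ k, g x) : ℝ × ℝ)))
  have i0 : IntegrableOn (fun r : ℝ => (r : ℂ) ^ (2 * n - 1) * auxF A ((μ * r) ^ k) 0) (Set.Ioi 0) := by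
    refine ((aux_wint' (2 * n - 1) k (by omega) μ hμ).const_mul C).mono' (hmF _ measurable_const).aestronglyMeasurable ?_
    refine (ae_restrict_iff' measurableSet_Ioi).2 (Filter.Eventually.of_forall fun x hx => ?_)
    have hx' : 0 < x := hx
    rw [norm_mul, norm_pow, Complex.norm_real, Real.norm_of_nonneg hx'.le]
    calc _ ≤ x ^ (2 * n - 1) * (C / (1 + ((μ * x) ^ k) ^ 2)) := by gcongr; exact hb _
      _ = _ := by ring
  have bd : ∀ x ∈ Set.Ioi (0:ℝ), ‖(x : ℂ) ^ (2 * n - 1) * auxF A ((μ * x) ^ k) x -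
      (x : ℂ) ^ (2 * n - 1) * auxF A ((μ * x) ^ k) 0‖ ≤ C * (x ^ (2 * n) / (1 + ((μ * x) ^ k) ^ 2)) := by
    intro x hx
    have hx' : 0 < x := hx
    rw [← mul_sub, norm_mul, norm_pow, Complex.norm_real, Real.norm_of_nonneg hx'.le]
    have e : x ^ (2 * n) = x ^ (2 * n - 1) * x := by
      rw [← pow_succ]; congr 1; omega
    calc _ ≤ x ^ (2 * n - 1) * (C * |x| / (1 + ((μ * x) ^ k) ^ 2)) := by gcongr; exact hd _ _
      _ = _ := by rw [e, abs_of_pos hx']; ring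
  have iw := (aux_wint' (2 * n) k (by omega) μ hμ).const_mul C
  have id : IntegrableOn (fun x : ℝ => (x : ℂ) ^ (2 * n - 1) * auxF A ((μ * x) ^ k) x -
      (x : ℂ) ^ (2 * n - 1) * auxF A ((μ * x) ^ k) 0) (Set.Ioi 0) := by
    refine iw.mono' ((hmF _ measurable_id).sub (hmF _ measurable_const)).aestronglyMeasurable ?_
    exact (ae_restrict_iff' measurableSet_Ioi).2 (Filter.Eventually.of_forall bd)
  have i1 : IntegrableOn (fun r : ℝ => (r : ℂ) ^ (2 * n - 1) * auxF A ((μ * r) ^ k) r) (Set.Ioi 0) := by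
    refine (id.add i0).congr (Filter.Eventually.of_forall fun x => ?_)
    simp
  have main : ((lam ^ (-((2 * n : ℝ) / (k : ℝ))) : ℝ) : ℂ) *
      (∫ x in Set.Ioi (0:ℝ), (x : ℂ) ^ (2 * n - 1) * auxF A (x ^ k) 0) =
      ∫ r in Set.Ioi (0:ℝ), (r : ℂ) ^ (2 * n - 1) * auxF A ((μ * r) ^ k) 0 := by
    have := integral_comp_mul_left_Ioi (fun x : ℝ => (x : ℂ) ^ (2 * n - 1) * auxF A (x ^ k) 0) 0 hμ
    rw [mul_zero] at this
    have h2 := hμp (2 * n)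
    push_cast at h2
    have h3 : (μ ^ (2 * n))⁻¹ = (μ ^ (2 * n - 1))⁻¹ * μ⁻¹ := by
      rw [← mul_inv, ← pow_succ]; congr 2; omega
    have hμc : (μ : ℂ) ≠ 0 := by exact_mod_cast hμ.ne'
    rw [← h2, h3, Complex.ofReal_mul, mul_assoc, ← Complex.real_smul (x := μ⁻¹), ← this,
      ← integral_const_mul]
    congr 1; ext r
    push_cast
    rw [mul_pow (μ : ℂ) (r : ℂ)]
    field_simp
  rw [← aux_J k n hk hn hkn A hA hcA, main, ← integral_sub i1 i0]
  refine (norm_integral_le_of_norm_le iw ((ae_restrict_iff' measurableSet_Ioi).2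
    (Filter.Eventually.of_forall bd))).trans (le_of_eq ?_)
  rw [integral_const_mul, aux_wscale _ _ _ hμ, hμp]
  push_cast
  ring
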